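/- For every g ∈ G_o the limits τ̄(g) = lim_{n→∞} τ_λ(gⁿ)/n and σ̄(g) = lim_{n→∞} σ(gⁿ)/n exist, and the map g ↦ τ̄(g) − π·σ̄(g) is a surjective group homomorphism G_o → ℝ; i.e., (τ̄ − πσ̄)(g∘h) = (τ̄ − πσ̄)(g) + (τ̄ − πσ̄)(h) for all g, h ∈ G_o, and every real number is attained. -/

import Mathlib

open MeasureTheory Filter Topology Set Function Real

noncomputable section

/-- The closed unit disk in `ℝ²`. -/
def disk : Set (ℝ × ℝ) := {p | p.1 ^ 2 + p.2 ^ 2 ≤ 1}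

/-- The boundary circle of the unit disk. -/
def bdry : Set (ℝ × ℝ) := {p | p.1 ^ 2 + p.2 ^ 2 = 1}

/-- Partial derivative in the `x`-direction. -/
def pdx (f : ℝ × ℝ → ℝ) (p : ℝ × ℝ) : ℝ := fderiv ℝ f p (1, 0)

/-- Partial derivative in the `y`-direction. -/
def pdy (f : ℝ × ℝ → ℝ) (p : ℝ × ℝ) : ℝ := fderiv ℝ f p (0, 1)

/-- The Jacobian determinant of a map `ℝ² → ℝ²`. -/
def jacDet (g : ℝ × ℝ → ℝ × ℝ) (p : ℝ × ℝ) : ℝ :=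
  pdx (fun q => (g q).1) p * pdy (fun q => (g q).2) p -
    pdy (fun q => (g q).1) p * pdx (fun q => (g q).2) p

/-- `g` represents an element of `Symp(D)`: a `C^∞` diffeomorphism of the closed
unit disk onto itself (smooth up to the boundary, i.e. the restriction of a
globally smooth map with globally smooth inverse on the disk) whose Jacobian
determinant is identically `1` on the disk. -/
def IsSymp (g : ℝ × ℝ → ℝ × ℝ) : Prop :=
  ContDiff ℝ (⊤ : ℕ∞) g ∧ MapsTo g disk disk ∧ (∀ p ∈ disk, jacDet g p = 1) ∧
    ∃ g' : ℝ × ℝ → ℝ × ℝ, ContDiff ℝ (⊤ : ℕ∞) g' ∧ MapsTo g' disk disk ∧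
      (∀ p ∈ disk, g' (g p) = p) ∧ (∀ p ∈ disk, g (g' p) = p)

/-- `g` represents an element of `G_o`: a symplectomorphism of the disk fixing the origin. -/
def IsSympO (g : ℝ × ℝ → ℝ × ℝ) : Prop :=
  IsSymp g ∧ g (0, 0) = (0, 0)

/-- `τ_λ(g) = ∫_D g*λ ∧ λ` for `λ = (x dy - y dx)/2`, written out in coordinates. -/
def tauL (g : ℝ × ℝ → ℝ × ℝ) : ℝ :=
  (1 / 4) * ∫ p in disk,
    (p.1 * ((g p).1 * pdx (fun q => (g q).2) p - (g p).2 * pdx (fun q => (g q).1) p) +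
     p.2 * ((g p).1 * pdy (fun q => (g q).2) p - (g p).2 * pdy (fun q => (g q).1) p))

/-- `σ(g) = ∫_γ (g*λ - λ)` along the radial path `γ(t) = (t,0)`, in coordinates. -/
def sigmaQ (g : ℝ × ℝ → ℝ × ℝ) : ℝ :=
  (1 / 2) * ∫ t in (0:ℝ)..1,
    ((g (t, 0)).1 * pdx (fun q => (g q).2) (t, 0) -
      (g (t, 0)).2 * pdx (fun q => (g q).1) (t, 0))

/-- `G` is a smooth isotopy in `Symp(D)` starting at the identity. -/
def IsIsotopy (G : ℝ → ℝ × ℝ → ℝ × ℝ) : Prop :=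
  ContDiff ℝ (⊤ : ℕ∞) (fun q : ℝ × (ℝ × ℝ) => G q.1 q.2) ∧
    (∀ t ∈ Icc (0:ℝ) 1, IsSymp (G t)) ∧ (∀ p ∈ disk, G 0 p = p)

/-- `f` is a family of Hamiltonian functions for the isotopy `G`, i.e.
`i_{X_t} ω = d f_t` where `X_t = (∂g_t/∂t) ∘ g_t⁻¹`; since `g_t` maps the disk
onto itself this is expressed at the points `G t p`, `p ∈ D`. -/
def IsHam (G : ℝ → ℝ × ℝ → ℝ × ℝ) (f : ℝ → ℝ × ℝ → ℝ) : Prop :=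
  ContDiff ℝ (⊤ : ℕ∞) (fun q : ℝ × (ℝ × ℝ) => f q.1 q.2) ∧
    ∀ t ∈ Icc (0:ℝ) 1, ∀ p ∈ disk,
      pdx (f t) (G t p) = -(deriv (fun s => G s p) t).2 ∧
      pdy (f t) (G t p) = (deriv (fun s => G s p) t).1

/-- `φ` is the lift of the boundary isotopy of `G`, with `φ 0 = id`. -/
def IsBoundaryLift (G : ℝ → ℝ × ℝ → ℝ × ℝ) (φ : ℝ → ℝ → ℝ) : Prop :=
  ContDiff ℝ (⊤ : ℕ∞) (fun q : ℝ × ℝ => φ q.1 q.2) ∧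
    (∀ t ∈ Icc (0:ℝ) 1, StrictMono (φ t) ∧ ∀ θ : ℝ, φ t (θ + 2 * π) = φ t θ + 2 * π) ∧
    (∀ θ : ℝ, φ 0 θ = θ) ∧
    (∀ t ∈ Icc (0:ℝ) 1, ∀ θ : ℝ,
      G t (Real.cos θ, Real.sin θ) = (Real.cos (φ t θ), Real.sin (φ t θ)))

/-!
For area-preserving `g` the form `g*λ - λ` is closed, so it has a primitive `K_g` on the disk with
`K_g(0) = 0`. For maps fixing the origin `K_{g ∘ h} = K_h + K_g ∘ h`, and since `h` preserves area,
`C(g) = ∫_D K_g` is a homomorphism.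

Along the boundary circle `K_g` has derivative at least `-1/2`, because `g` restricts there to an
orientation-preserving map; being `2π`-periodic, it oscillates by at most `π`. Stokes' theorem in
polar coordinates gives `τ(g) = (1/2) ∫ K_g(cos θ, sin θ) dθ - C(g)`, while `σ(g) = K_g(1, 0)`, so
`|τ + C - πσ| ≤ π ^ 2` and `σ` is a quasimorphism. After homogenization `τ̄ - πσ̄ = -C`. The twist
by the angle `c |p| ^ 2` has `C = cπ / 12`, whence surjectivity.
-/

section General

lemma exists_tendsto_div_of_abs_add_sub_sub_le {a : ℕ → ℝ} {C : ℝ}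
    (h : ∀ m n, |a (m + n) - a m - a n| ≤ C) :
    ∃ l, Tendsto (fun n : ℕ => a n / n) atTop (𝓝 l) := by
  -- `a + C` is subadditive and at least linear, so Fekete's lemma applies to it.
  have hsub : Subadditive (fun n => a n + C) := fun m n => by
    linarith [(abs_le.1 (h m n)).2]
  have hlower (n : ℕ) : n * (a 1 - C) ≤ a n + C := by
    induction n with
    | zero =>
      have h0 := (abs_le.1 (h 0 0)).2
      simp only [add_zero, Nat.cast_zero, zero_mul] at h0 ⊢
      linarith
    | succ n ih =>
      have h1 := (abs_le.1 (h n 1)).1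
      push_cast
      linarith
  have hbdd : BddBelow (range fun n : ℕ => (a n + C) / n) := by
    refine ⟨min 0 (a 1 - C), ?_⟩
    rintro _ ⟨n, rfl⟩
    rcases n.eq_zero_or_pos with rfl | hn
    · simp
    · have hn' : (0 : ℝ) < n := mod_cast hn
      refine (min_le_right _ _).trans ?_
      rw [le_div_iff₀ hn', mul_comm]
      exact hlower n
  refine ⟨hsub.lim, ?_⟩
  have hlim := (hsub.tendsto_lim hbdd).sub (tendsto_const_div_atTop_nhds_zero_nat C)
  rw [sub_zero] at hlim
  exact hlim.congr fun n => by ring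

lemma abs_sub_le_of_periodic_of_monotone_add_mul {f : ℝ → ℝ} {T c : ℝ} (hT : 0 < T)
    (hf : Periodic f T) (hmono : Monotone fun t => f t + c * t) (a b : ℝ) :
    |f a - f b| ≤ c * T := by
  obtain ⟨s, ⟨hbs, hsb⟩, hs⟩ := hf.exists_mem_Ico hT a b
  have hlower := hmono hbs
  have hupper := hmono hsb.le
  have hc : 0 ≤ c := by
    have hperiod := hmono (le_add_of_nonneg_right hT.le : b ≤ b + T)
    simp only [hf b] at hperiod
    exact nonneg_of_mul_nonneg_left (by linarith : 0 ≤ c * T) hT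
  simp only [hf b] at hlower hupper
  rw [hs, abs_le]
  constructor <;> nlinarith

lemma map_eq_fst_smul_add_snd_smul {R M F : Type*} [Semiring R] [AddCommMonoid M] [Module R M]
    [FunLike F (R × R) M] [LinearMapClass F R (R × R) M] (L : F) (v : R × R) :
    L v = v.1 • L (1, 0) + v.2 • L (0, 1) := by
  rw [← map_smul, ← map_smul, ← map_add]
  simp

end General

section AreaForm

/-- The standard area form `ω = dx ∧ dy` on the plane, as a constant bilinear form. -/
def areaForm : ℝ × ℝ →L[ℝ] ℝ × ℝ →L[ℝ] ℝ :=
  (ContinuousLinearMap.fst ℝ ℝ ℝ).smulRight (ContinuousLinearMap.snd ℝ ℝ ℝ) -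
    (ContinuousLinearMap.snd ℝ ℝ ℝ).smulRight (ContinuousLinearMap.fst ℝ ℝ ℝ)

/-- The Euclidean inner product of the plane; the norm of the product type `ℝ × ℝ` is the
supremum norm, so that Mathlib's `inner` is not available here. -/
def dot : ℝ × ℝ →L[ℝ] ℝ × ℝ →L[ℝ] ℝ :=
  (ContinuousLinearMap.fst ℝ ℝ ℝ).smulRight (ContinuousLinearMap.fst ℝ ℝ ℝ) +
    (ContinuousLinearMap.snd ℝ ℝ ℝ).smulRight (ContinuousLinearMap.snd ℝ ℝ ℝ)

lemma areaForm_apply (v w : ℝ × ℝ) : areaForm v w = v.1 * w.2 - v.2 * w.1 := by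
  simp [areaForm]

lemma dot_apply (v w : ℝ × ℝ) : dot v w = v.1 * w.1 + v.2 * w.2 := by
  simp [dot]

lemma areaForm_map_map (L : ℝ × ℝ →L[ℝ] ℝ × ℝ) (v w : ℝ × ℝ) :
    areaForm (L v) (L w) = L.det * areaForm v w := by
  have hdet : L.det = areaForm (L (1, 0)) (L (0, 1)) := by
    rw [ContinuousLinearMap.det, ← LinearMap.det_toMatrix (Module.Basis.finTwoProd ℝ),
      Matrix.det_fin_two, areaForm_apply]
    simp only [LinearMap.toMatrix_apply, Module.Basis.finTwoProd_zero,
      Module.Basis.finTwoProd_one, Module.Basis.coe_finTwoProd_repr, ContinuousLinearMap.coe_coe,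
      Matrix.cons_val_zero, Matrix.cons_val_one, Matrix.cons_val_fin_one]
    ring
  rw [hdet, map_eq_fst_smul_add_snd_smul L v, map_eq_fst_smul_add_snd_smul L w]
  simp only [areaForm_apply, Prod.fst_add, Prod.snd_add, Prod.smul_fst, Prod.smul_snd, smul_eq_mul]
  ring

lemma hasFDerivAt_sq_add_sq (p : ℝ × ℝ) :
    HasFDerivAt (fun q : ℝ × ℝ => q.1 ^ 2 + q.2 ^ 2) ((2 : ℝ) • dot p) p := by
  refine ((hasFDerivAt_fst.pow 2).add (hasFDerivAt_snd.pow 2)).congr_fderiv ?_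
  ext <;> simp [dot_apply]

lemma fderiv_fst_apply {g : ℝ × ℝ → ℝ × ℝ} {p : ℝ × ℝ} (hg : DifferentiableAt ℝ g p)
    (v : ℝ × ℝ) : fderiv ℝ (fun q => (g q).1) p v = (fderiv ℝ g p v).1 := by
  rw [hg.hasFDerivAt.fst.fderiv]
  rfl

lemma fderiv_snd_apply {g : ℝ × ℝ → ℝ × ℝ} {p : ℝ × ℝ} (hg : DifferentiableAt ℝ g p)
    (v : ℝ × ℝ) : fderiv ℝ (fun q => (g q).2) p v = (fderiv ℝ g p v).2 := by
  rw [hg.hasFDerivAt.snd.fderiv]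
  rfl

lemma jacDet_eq_areaForm {g : ℝ × ℝ → ℝ × ℝ} {p : ℝ × ℝ} (hg : DifferentiableAt ℝ g p) :
    jacDet g p = areaForm (fderiv ℝ g p (1, 0)) (fderiv ℝ g p (0, 1)) := by
  simp only [jacDet, pdx, pdy, fderiv_fst_apply hg, fderiv_snd_apply hg, areaForm_apply]
  ring

lemma jacDet_eq_det {g : ℝ × ℝ → ℝ × ℝ} {p : ℝ × ℝ} (hg : DifferentiableAt ℝ g p) :
    jacDet g p = (fderiv ℝ g p).det := by
  rw [jacDet_eq_areaForm hg, areaForm_map_map, areaForm_apply]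
  ring

end AreaForm

section Disk

lemma convex_disk : Convex ℝ disk := by
  have hsq : ConvexOn ℝ univ fun x : ℝ => x ^ 2 := even_two.convexOn_pow
  simpa [disk] using ((hsq.comp_linearMap (LinearMap.fst ℝ ℝ ℝ)).add
    (hsq.comp_linearMap (LinearMap.snd ℝ ℝ ℝ))).convex_le 1

lemma isClosed_disk : IsClosed disk :=
  isClosed_le (by fun_prop) continuous_const

lemma isCompact_disk : IsCompact disk := by
  refine (isCompact_Icc (a := ((-1, -1) : ℝ × ℝ)) (b := (1, 1))).of_isClosed_subset
    isClosed_disk fun p (hp : p.1 ^ 2 + p.2 ^ 2 ≤ 1) => ?_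
  have h1 : |p.1| ≤ 1 := abs_le_one_iff_mul_self_le_one.2 (by nlinarith [sq_nonneg p.2])
  have h2 : |p.2| ≤ 1 := abs_le_one_iff_mul_self_le_one.2 (by nlinarith [sq_nonneg p.1])
  exact ⟨⟨(abs_le.1 h1).1, (abs_le.1 h2).1⟩, (abs_le.1 h1).2, (abs_le.1 h2).2⟩

lemma bdry_subset_disk : bdry ⊆ disk := fun _ hp => le_of_eq hp

lemma zero_mem_disk : (0 : ℝ × ℝ) ∈ disk := by simp [disk]

lemma disk_mem_nhds {p : ℝ × ℝ} (hp : p.1 ^ 2 + p.2 ^ 2 < 1) : disk ∈ 𝓝 p := by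
  have hopen : IsOpen {q : ℝ × ℝ | q.1 ^ 2 + q.2 ^ 2 < 1} :=
    isOpen_lt (by fun_prop) continuous_const
  filter_upwards [hopen.mem_nhds hp] with q hq
  exact le_of_lt hq

lemma uniqueDiffOn_disk : UniqueDiffOn ℝ disk :=
  uniqueDiffOn_convex convex_disk ⟨0, mem_interior_iff_mem_nhds.2 (disk_mem_nhds (by simp))⟩

lemma sq_add_sq_smul (r : ℝ) (p : ℝ × ℝ) :
    (r • p).1 ^ 2 + (r • p).2 ^ 2 = r ^ 2 * (p.1 ^ 2 + p.2 ^ 2) := by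
  simp only [Prod.smul_fst, Prod.smul_snd, smul_eq_mul]
  ring

lemma smul_mem_disk {p : ℝ × ℝ} (hp : p ∈ disk) {r : ℝ} (hr : r ∈ Icc (0 : ℝ) 1) :
    r • p ∈ disk :=
  convex_disk.smul_mem_of_zero_mem zero_mem_disk hp hr

lemma disk_mem_nhds_smul {p : ℝ × ℝ} (hp : p ∈ disk) {r : ℝ} (hr : r ∈ Ioo (0 : ℝ) 1) :
    disk ∈ 𝓝 (r • p) := by
  refine disk_mem_nhds ?_
  rw [sq_add_sq_smul]
  have hr2 : r ^ 2 < 1 := by nlinarith [hr.1, hr.2]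
  exact (mul_le_of_le_one_right (sq_nonneg r) hp).trans_lt hr2

lemma disk_notMem_nhds {p : ℝ × ℝ} (hp : p ∈ bdry) : disk ∉ 𝓝 p := by
  intro hdisk
  have hnear : ∀ᶠ r : ℝ in 𝓝 1, r • p ∈ disk := by
    have hcont : Tendsto (fun r : ℝ => r • p) (𝓝 1) (𝓝 ((1 : ℝ) • p)) :=
      Continuous.tendsto (by fun_prop) 1
    rw [one_smul] at hcont
    exact hcont hdisk
  obtain ⟨r, hr, hmem⟩ := ((frequently_gt_nhds (1 : ℝ)).and_eventually hnear).exists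
  have hr2 : r ^ 2 * 1 ≤ 1 := by
    rw [← show p.1 ^ 2 + p.2 ^ 2 = 1 from hp, ← sq_add_sq_smul, hp]
    exact hmem
  nlinarith

lemma cos_sin_mem_bdry (θ : ℝ) : (cos θ, sin θ) ∈ bdry := cos_sq_add_sin_sq θ

lemma exists_eq_cos_sin_of_mem_bdry {p : ℝ × ℝ} (hp : p ∈ bdry) :
    ∃ θ : ℝ, p = (cos θ, sin θ) := by
  have hnorm : ‖(⟨p.1, p.2⟩ : ℂ)‖ = 1 := by
    rw [Complex.norm_eq_sqrt_sq_add_sq, show p.1 ^ 2 + p.2 ^ 2 = 1 from hp, sqrt_one]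
  obtain ⟨θ, hθ⟩ := (Complex.norm_eq_one_iff _).1 hnorm
  refine ⟨θ, Prod.ext ?_ ?_⟩
  · simpa [Complex.exp_ofReal_mul_I_re] using (congrArg Complex.re hθ).symm
  · simpa [Complex.exp_ofReal_mul_I_im] using (congrArg Complex.im hθ).symm

lemma hasDerivAt_cos_sin (θ : ℝ) :
    HasDerivAt (fun t => (cos t, sin t)) (-sin θ, cos θ) θ :=
  (hasDerivAt_cos θ).prodMk (hasDerivAt_sin θ)

lemma polarCoord_symm_eq_smul (p : ℝ × ℝ) : polarCoord.symm p = p.1 • (cos p.2, sin p.2) := rfl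

lemma polarCoord_target_inter_preimage_disk :
    polarCoord.target ∩ polarCoord.symm ⁻¹' disk = Ioc 0 1 ×ˢ Ioo (-π) π := by
  ext ⟨r, θ⟩
  simp only [polarCoord_target, polarCoord_symm_eq_smul, mem_inter_iff, mem_prod, mem_Ioi, mem_Ioo,
    mem_Ioc, mem_preimage, disk, mem_ofPred_eq, sq_add_sq_smul, cos_sq_add_sin_sq, mul_one]
  constructor
  · rintro ⟨⟨h0, hθ⟩, h1⟩
    exact ⟨⟨h0, (sq_le_one_iff₀ h0.le).1 h1⟩, hθ⟩
  · rintro ⟨⟨h0, h1⟩, hθ⟩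
    exact ⟨⟨h0, hθ⟩, (sq_le_one_iff₀ h0.le).2 h1⟩

lemma setIntegral_disk_eq_polar {E : Type*} [NormedAddCommGroup E] [NormedSpace ℝ E]
    {F : ℝ × ℝ → E} (hF : ContinuousOn F disk) :
    ∫ p in disk, F p = ∫ θ in (-π)..π, ∫ r in (0 : ℝ)..1, r • F (r • (cos θ, sin θ)) := by
  have hint : IntegrableOn (fun p : ℝ × ℝ => p.1 • F (p.1 • (cos p.2, sin p.2)))
      (Ioc 0 1 ×ˢ Ioo (-π) π) := by
    refine (ContinuousOn.integrableOn_compact (isCompact_Icc.prod isCompact_Icc) ?_).mono_set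
      (prod_mono Ioc_subset_Icc_self Ioo_subset_Icc_self)
    exact continuousOn_fst.smul (hF.comp (by fun_prop) fun p hp =>
      smul_mem_disk (bdry_subset_disk (cos_sin_mem_bdry p.2)) hp.1)
  have hmeas : MeasurableSet (polarCoord.symm ⁻¹' disk) :=
    isClosed_disk.measurableSet.preimage continuous_polarCoord_symm.measurable
  calc ∫ p in disk, F p
      = ∫ p in polarCoord.target, p.1 • disk.indicator F (polarCoord.symm p) := by
        rw [← integral_indicator isClosed_disk.measurableSet, integral_comp_polarCoord_symm]
    _ = ∫ p in polarCoord.target, (polarCoord.symm ⁻¹' disk).indicator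
          (fun p => p.1 • F (p.1 • (cos p.2, sin p.2))) p := by
        congr 1 with p
        by_cases hp : polarCoord.symm p ∈ disk
        · rw [indicator_of_mem hp, indicator_of_mem (mem_preimage.2 hp),
            polarCoord_symm_eq_smul]
        · rw [indicator_of_notMem hp, indicator_of_notMem (mem_preimage.not.2 hp), smul_zero]
    _ = ∫ p in Ioc (0 : ℝ) 1 ×ˢ Ioo (-π) π, p.1 • F (p.1 • (cos p.2, sin p.2)) := by
        rw [setIntegral_indicator hmeas, polarCoord_target_inter_preimage_disk]
    _ = ∫ θ in (-π)..π, ∫ r in (0 : ℝ)..1, r • F (r • (cos θ, sin θ)) := by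
        rw [Measure.volume_eq_prod, ← Measure.prod_restrict, integral_prod_symm _ (by
          rwa [Measure.prod_restrict]), intervalIntegral.integral_of_le (by linarith [pi_pos]),
          integral_Ioc_eq_integral_Ioo]
        simp only [intervalIntegral.integral_of_le zero_le_one]

end Disk


section Symplectic

variable {g h : ℝ × ℝ → ℝ × ℝ}

lemma IsSymp.differentiable (hg : IsSymp g) : Differentiable ℝ g :=
  hg.1.differentiable (by simp)

lemma IsSymp.differentiable_fderiv (hg : IsSymp g) : Differentiable ℝ (fderiv ℝ g) :=
  ((contDiff_infty.1 hg.1 2).fderiv_right (m := 1) (by norm_num)).differentiable one_ne_zero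

lemma IsSymp.mapsTo (hg : IsSymp g) : MapsTo g disk disk := hg.2.1

lemma IsSymp.det_fderiv (hg : IsSymp g) {p : ℝ × ℝ} (hp : p ∈ disk) : (fderiv ℝ g p).det = 1 := by
  rw [← jacDet_eq_det (hg.differentiable p), hg.2.2.1 p hp]

lemma IsSymp.areaForm_fderiv (hg : IsSymp g) {p : ℝ × ℝ} (hp : p ∈ disk) (v w : ℝ × ℝ) :
    areaForm (fderiv ℝ g p v) (fderiv ℝ g p w) = areaForm v w := by
  rw [areaForm_map_map, hg.det_fderiv hp, one_mul]

lemma jacDet_comp {p : ℝ × ℝ} (hg : DifferentiableAt ℝ g (h p)) (hh : DifferentiableAt ℝ h p) :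
    jacDet (g ∘ h) p = jacDet g (h p) * jacDet h p := by
  rw [jacDet_eq_det (hg.comp p hh), jacDet_eq_det hg, jacDet_eq_det hh, fderiv_comp p hg hh]
  exact LinearMap.det_comp _ _

lemma IsSymp.comp (hg : IsSymp g) (hh : IsSymp h) : IsSymp (g ∘ h) := by
  have hdg := hg.differentiable
  have hdh := hh.differentiable
  obtain ⟨hg_smooth, hg_maps, hg_jac, g', hg'_smooth, hg'_maps, hg_left, hg_right⟩ := hg
  obtain ⟨hh_smooth, hh_maps, hh_jac, h', hh'_smooth, hh'_maps, hh_left, hh_right⟩ := hh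
  refine ⟨hg_smooth.comp hh_smooth, hg_maps.comp hh_maps, fun p hp => ?_, h' ∘ g',
    hh'_smooth.comp hg'_smooth, hh'_maps.comp hg'_maps, fun p hp => ?_, fun p hp => ?_⟩
  · rw [jacDet_comp (hdg _) (hdh _), hg_jac _ (hh_maps hp), hh_jac _ hp, one_mul]
  · simp only [comp_apply, hg_left _ (hh_maps hp), hh_left _ hp]
  · simp only [comp_apply, hh_right _ (hg'_maps hp), hg_right _ hp]

lemma isSymp_id : IsSymp id := by
  refine ⟨contDiff_id, mapsTo_id _, fun p _ => ?_, id, contDiff_id, mapsTo_id _, fun _ _ => rfl,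
    fun _ _ => rfl⟩
  rw [jacDet_eq_det differentiableAt_id, fderiv_id]
  exact LinearMap.det_id

lemma isSympO_id : IsSympO id := ⟨isSymp_id, rfl⟩

lemma IsSympO.comp (hg : IsSympO g) (hh : IsSympO h) : IsSympO (g ∘ h) :=
  ⟨hg.1.comp hh.1, by rw [comp_apply, hh.2, hg.2]⟩

lemma IsSympO.iterate (hg : IsSympO g) (n : ℕ) : IsSympO g^[n] := by
  induction n with
  | zero => exact isSympO_id
  | succ n ih => exact ih.comp hg

lemma IsSympO.map_zero (hg : IsSympO g) : g 0 = 0 := hg.2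

lemma IsSymp.setIntegral_comp (hg : IsSymp g) {E : Type*} [NormedAddCommGroup E]
    [NormedSpace ℝ E] (F : ℝ × ℝ → E) : ∫ p in disk, F (g p) = ∫ p in disk, F p := by
  obtain ⟨g', -, hg'_maps, hleft, hright⟩ := hg.2.2.2
  have himage : g '' disk = disk :=
    hg.mapsTo.image_subset.antisymm fun p hp => ⟨g' p, hg'_maps hp, hright p hp⟩
  have hinj : InjOn g disk := LeftInvOn.injOn hleft
  have hchange := integral_image_eq_integral_abs_det_fderiv_smul volume isClosed_disk.measurableSet
    (fun p _ => (hg.differentiable p).hasFDerivAt.hasFDerivWithinAt) hinj F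
  rw [himage] at hchange
  rw [hchange]
  refine setIntegral_congr_fun isClosed_disk.measurableSet fun p hp => ?_
  simp only [hg.det_fderiv hp, abs_one, one_smul]

end Symplectic

section Boundary

variable {g : ℝ × ℝ → ℝ × ℝ}

-- Otherwise the inverse map, a submersion, would send a neighbourhood of the interior point `g p`
-- onto a neighbourhood of `p` contained in the disk.
lemma IsSymp.mapsTo_bdry (hg : IsSymp g) : MapsTo g bdry bdry := by
  intro p hp
  obtain ⟨g', hg'_smooth, hg'_maps, hleft, -⟩ := hg.2.2.2
  have hpd := bdry_subset_disk hp
  have hg'_strict : HasStrictFDerivAt g' (fderiv ℝ g' (g p)) (g p) :=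
    hg'_smooth.contDiffAt.hasStrictFDerivAt (by simp)
  have hcomp : (fderiv ℝ g' (g p)).comp (fderiv ℝ g p) = .id ℝ (ℝ × ℝ) := by
    refine (uniqueDiffOn_disk p hpd).eq ?_ (hasFDerivWithinAt_id p disk)
    refine HasFDerivWithinAt.congr ?_ (fun q hq => (hleft q hq).symm) (hleft p hpd).symm
    exact (hg'_strict.hasFDerivAt.comp p (hg.differentiable p).hasFDerivAt).hasFDerivWithinAt
  have hsurj : (fderiv ℝ g' (g p)).range = ⊤ :=
    LinearMap.range_eq_top.2 fun w => ⟨fderiv ℝ g p w, DFunLike.congr_fun hcomp w⟩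
  by_contra hgp
  have hnhds : g' ⁻¹' disk ∈ 𝓝 (g p) :=
    mem_of_superset (disk_mem_nhds ((hg.mapsTo hpd).lt_of_ne hgp)) hg'_maps
  have hdisk : disk ∈ 𝓝 (g' (g p)) := hg'_strict.map_nhds_eq_of_surj hsurj ▸ hnhds
  rw [hleft p hpd] at hdisk
  exact disk_notMem_nhds hp hdisk

lemma IsSymp.dot_fderiv_tangent_eq_zero (hg : IsSymp g) (θ : ℝ) :
    dot (g (cos θ, sin θ)) (fderiv ℝ g (cos θ, sin θ) (-sin θ, cos θ)) = 0 := by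
  have hcurve : HasDerivAt (fun t => g (cos t, sin t))
      (fderiv ℝ g (cos θ, sin θ) (-sin θ, cos θ)) θ :=
    (hg.differentiable _).hasFDerivAt.comp_hasDerivAt θ (hasDerivAt_cos_sin θ)
  have hnorm := (hasFDerivAt_sq_add_sq _).comp_hasDerivAt θ hcurve
  have hconst : (fun q : ℝ × ℝ => q.1 ^ 2 + q.2 ^ 2) ∘ (fun t => g (cos t, sin t)) =
      fun _ => 1 := funext fun t => hg.mapsTo_bdry (cos_sin_mem_bdry t)
  rw [hconst] at hnorm
  simpa using hnorm.unique (hasDerivAt_const θ (1 : ℝ))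

lemma IsSymp.dot_fderiv_self_nonneg (hg : IsSymp g) {p : ℝ × ℝ} (hp : p ∈ bdry) :
    0 ≤ dot (g p) (fderiv ℝ g p p) := by
  have hmax : IsLocalMaxOn ((fun q : ℝ × ℝ => q.1 ^ 2 + q.2 ^ 2) ∘ g) disk p := by
    filter_upwards [self_mem_nhdsWithin] with q hq
    exact (hg.mapsTo hq : _ ≤ (1 : ℝ)).trans_eq (hg.mapsTo_bdry hp).symm
  have hderiv := ((hasFDerivAt_sq_add_sq _).comp p
    (hg.differentiable p).hasFDerivAt).hasFDerivWithinAt (s := disk)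
  have hinward := hmax.hasFDerivWithinAt_nonpos hderiv (sub_mem_posTangentConeAt_of_segment_subset
    (convex_disk.segment_subset (bdry_subset_disk hp) zero_mem_disk))
  simp only [zero_sub, map_neg, ContinuousLinearMap.comp_apply, smul_apply,
    smul_eq_mul] at hinward
  linarith

-- In terms of the frame `a = Dg v`, `b = Dg u` at `q = g u`, where `u` is the radius and `v` the
-- tangent: `q` is orthogonal to `a`, so `ω(b, a) = 1` forces `ω(q, a) * (q ⬝ b) = 1`.
lemma IsSymp.areaForm_fderiv_tangent_nonneg (hg : IsSymp g) (θ : ℝ) :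
    0 ≤ areaForm (g (cos θ, sin θ)) (fderiv ℝ g (cos θ, sin θ) (-sin θ, cos θ)) := by
  have hu := cos_sin_mem_bdry θ
  have harea := hg.areaForm_fderiv (bdry_subset_disk hu) (cos θ, sin θ) (-sin θ, cos θ)
  have htangent := hg.dot_fderiv_tangent_eq_zero θ
  have hnormal := hg.dot_fderiv_self_nonneg hu
  have hq : _ = (1 : ℝ) := hg.mapsTo_bdry hu
  rw [areaForm_apply (cos θ, sin θ)] at harea
  generalize fderiv ℝ g (cos θ, sin θ) (-sin θ, cos θ) = a at *
  generalize fderiv ℝ g (cos θ, sin θ) (cos θ, sin θ) = b at *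
  generalize g (cos θ, sin θ) = q at *
  have hprod : areaForm q a * dot q b = 1 := by
    simp only [areaForm_apply, dot_apply] at *
    linear_combination (b.1 * a.2 - b.2 * a.1) * hq + harea +
      (q.1 * b.2 - q.2 * b.1) * htangent + cos_sq_add_sin_sq θ
  exact (pos_of_mul_pos_left (hprod ▸ one_pos) hnormal).le

end Boundary

section Action

variable {g h : ℝ × ℝ → ℝ × ℝ}

/-- The primitive `λ = (x dy - y dx) / 2` of the area form, i.e. `λ_p = ω(p, ·) / 2`. -/
def liouville : ℝ × ℝ →L[ℝ] ℝ × ℝ →L[ℝ] ℝ := (1 / 2 : ℝ) • areaForm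

lemma liouville_apply (p v : ℝ × ℝ) : liouville p v = 1 / 2 * areaForm p v := rfl

/-- The 1-form `g*λ - λ`; it is closed on the disk when `g` preserves area. -/
def actionForm (g : ℝ × ℝ → ℝ × ℝ) (p : ℝ × ℝ) : ℝ × ℝ →L[ℝ] ℝ :=
  (liouville (g p)).comp (fderiv ℝ g p) - liouville p

/-- The primitive of `g*λ - λ` that vanishes at the origin, as an integral along radii. -/
def action (g : ℝ × ℝ → ℝ × ℝ) (p : ℝ × ℝ) : ℝ :=
  ∫ᶜ q in Path.segment 0 p, actionForm g q

lemma actionForm_apply (p v : ℝ × ℝ) :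
    actionForm g p v = liouville (g p) (fderiv ℝ g p v) - liouville p v := rfl

lemma action_eq_intervalIntegral (g : ℝ × ℝ → ℝ × ℝ) (p : ℝ × ℝ) :
    action g p = ∫ t in (0 : ℝ)..1, actionForm g (t • p) p := by
  simp only [action, curveIntegral_segment, AffineMap.lineMap_apply_module, smul_zero, zero_add,
    sub_zero]

lemma action_zero (g : ℝ × ℝ → ℝ × ℝ) : action g 0 = 0 := by
  simp only [action_eq_intervalIntegral, map_zero, intervalIntegral.integral_zero]

lemma hasFDerivAt_actionForm {p : ℝ × ℝ} (hg : DifferentiableAt ℝ g p)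
    (hg' : DifferentiableAt ℝ (fderiv ℝ g) p) :
    HasFDerivAt (actionForm g)
      (((ContinuousLinearMap.compL ℝ (ℝ × ℝ) (ℝ × ℝ) ℝ) (liouville (g p))).comp
          (fderiv ℝ (fderiv ℝ g) p) +
        (((ContinuousLinearMap.compL ℝ (ℝ × ℝ) (ℝ × ℝ) ℝ).flip (fderiv ℝ g p)).comp
          (liouville.comp (fderiv ℝ g p))) - liouville) p :=
  ((liouville.hasFDerivAt.comp p hg.hasFDerivAt).clm_comp hg'.hasFDerivAt).sub
    liouville.hasFDerivAt

-- The antisymmetric part of the derivative is `g*ω - ω`.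
lemma IsSymp.fderiv_actionForm_symmetric (hg : IsSymp g) {p : ℝ × ℝ} (hp : p ∈ disk)
    (v w : ℝ × ℝ) : fderiv ℝ (actionForm g) p v w = fderiv ℝ (actionForm g) p w v := by
  have hsymm : fderiv ℝ (fderiv ℝ g) p v w = fderiv ℝ (fderiv ℝ g) p w v :=
    (contDiff_infty.1 hg.1 2).contDiffAt.isSymmSndFDerivAt
      (by simp [minSmoothness_of_isRCLikeNormedField]) v w
  rw [(hasFDerivAt_actionForm (hg.differentiable p) (hg.differentiable_fderiv p)).fderiv]
  simp only [sub_apply, add_apply, ContinuousLinearMap.comp_apply,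
    ContinuousLinearMap.compL_apply, ContinuousLinearMap.flip_apply, liouville_apply,
    hg.areaForm_fderiv hp, hsymm]
  ring

lemma IsSymp.continuous_actionForm (hg : IsSymp g) : Continuous (actionForm g) := by
  have hg_cont := hg.1.continuous
  have hg'_cont := hg.1.continuous_fderiv (by simp)
  unfold actionForm
  fun_prop

lemma IsSymp.differentiable_actionForm (hg : IsSymp g) : Differentiable ℝ (actionForm g) :=
  fun p => (hasFDerivAt_actionForm (hg.differentiable p)
    (hg.differentiable_fderiv p)).differentiableAt

lemma IsSymp.hasFDerivWithinAt_action (hg : IsSymp g) {p : ℝ × ℝ} (hp : p ∈ disk) :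
    HasFDerivWithinAt (action g) (actionForm g p) disk p :=
  convex_disk.hasFDerivWithinAt_curveIntegral_segment_of_hasFDerivWithinAt_symmetric
    (fun q _ => (hg.differentiable_actionForm q).hasFDerivAt.hasFDerivWithinAt)
    (fun _ hq v _ w _ => hg.fderiv_actionForm_symmetric hq v w) zero_mem_disk hp

lemma IsSymp.continuousOn_action (hg : IsSymp g) : ContinuousOn (action g) disk :=
  fun _ hp => (hg.hasFDerivWithinAt_action hp).continuousWithinAt

lemma IsSymp.hasDerivAt_action_smul (hg : IsSymp g) {p : ℝ × ℝ} (hp : p ∈ disk) {r : ℝ}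
    (hr : r ∈ Ioo (0 : ℝ) 1) :
    HasDerivAt (fun t : ℝ => action g (t • p)) (actionForm g (r • p) p) r := by
  have hmem := smul_mem_disk hp (Ioo_subset_Icc_self hr)
  have haction := (hg.hasFDerivWithinAt_action hmem).hasFDerivAt (disk_mem_nhds_smul hp hr)
  have hray : HasDerivAt (fun t : ℝ => t • p) p r := by
    simpa using (hasDerivAt_id r).smul_const p
  exact haction.comp_hasDerivAt r hray

lemma IsSymp.hasDerivAt_action_cos_sin (hg : IsSymp g) (θ : ℝ) :
    HasDerivAt (fun t => action g (cos t, sin t))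
      (actionForm g (cos θ, sin θ) (-sin θ, cos θ)) θ := by
  have hmem (t : ℝ) : (cos t, sin t) ∈ disk := bdry_subset_disk (cos_sin_mem_bdry t)
  have hcomp := (hg.hasFDerivWithinAt_action (hmem θ)).comp_hasDerivWithinAt θ
    (hasDerivAt_cos_sin θ).hasDerivWithinAt (s := univ) fun t _ => hmem t
  exact hasDerivWithinAt_univ.1 hcomp

lemma actionForm_comp {p : ℝ × ℝ} (hg : DifferentiableAt ℝ g (h p))
    (hh : DifferentiableAt ℝ h p) :
    actionForm (g ∘ h) p = actionForm h p + (actionForm g (h p)).comp (fderiv ℝ h p) := by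
  refine ContinuousLinearMap.ext fun v => ?_
  simp only [actionForm_apply, fderiv_comp p hg hh, comp_apply, ContinuousLinearMap.comp_apply,
    add_apply]
  ring

lemma action_comp (hg : IsSympO g) (hh : IsSympO h) {p : ℝ × ℝ} (hp : p ∈ disk) :
    action (g ∘ h) p = action h p + action g (h p) := by
  have hgh {q : ℝ × ℝ} (hq : q ∈ disk) := (hg.comp hh).1.hasFDerivWithinAt_action hq
  have hsum {q : ℝ × ℝ} (hq : q ∈ disk) :
      HasFDerivWithinAt (fun q => action h q + action g (h q)) (actionForm (g ∘ h) q) disk q := by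
    rw [actionForm_comp (hg.1.differentiable _) (hh.1.differentiable _)]
    exact (hh.1.hasFDerivWithinAt_action hq).add <|
      (hg.1.hasFDerivWithinAt_action (hh.1.mapsTo hq)).comp q
        (hh.1.differentiable q).hasFDerivAt.hasFDerivWithinAt hh.1.mapsTo
  refine convex_disk.eqOn_of_fderivWithin_eq (𝕜 := ℝ)
    (fun q hq => (hgh hq).differentiableWithinAt) (fun q hq => (hsum hq).differentiableWithinAt)
    uniqueDiffOn_disk (fun q hq => ?_) zero_mem_disk ?_ hp
  · rw [(hgh hq).fderivWithin (uniqueDiffOn_disk q hq),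
      (hsum hq).fderivWithin (uniqueDiffOn_disk q hq)]
  · simp only [hh.map_zero, action_zero, add_zero]

lemma sigmaQ_eq_action (hg : Differentiable ℝ g) : sigmaQ g = action g (1, 0) := by
  rw [sigmaQ, action_eq_intervalIntegral, ← intervalIntegral.integral_const_mul]
  refine intervalIntegral.integral_congr fun t _ => ?_
  simp only [pdx, fderiv_fst_apply (hg _), fderiv_snd_apply (hg _), actionForm_apply,
    liouville_apply, areaForm_apply, Prod.smul_mk, smul_eq_mul, mul_one, mul_zero]
  ring

lemma IsSymp.monotone_action_cos_sin_add (hg : IsSymp g) :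
    Monotone fun t => action g (cos t, sin t) + 1 / 2 * t := by
  have hderiv (θ : ℝ) := (hg.hasDerivAt_action_cos_sin θ).add ((hasDerivAt_id θ).const_mul (1 / 2))
  refine monotone_of_hasDerivAt_nonneg hderiv fun θ => ?_
  have htangent : areaForm (cos θ, sin θ) (-sin θ, cos θ) = 1 := by
    rw [areaForm_apply]
    linear_combination cos_sq_add_sin_sq θ
  have hspeed := hg.areaForm_fderiv_tangent_nonneg θ
  simp only [Pi.zero_apply, actionForm_apply, liouville_apply, htangent]
  linarith

lemma IsSymp.abs_action_sub_le (hg : IsSymp g) {p q : ℝ × ℝ} (hp : p ∈ bdry) (hq : q ∈ bdry) :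
    |action g p - action g q| ≤ π := by
  obtain ⟨a, rfl⟩ := exists_eq_cos_sin_of_mem_bdry hp
  obtain ⟨b, rfl⟩ := exists_eq_cos_sin_of_mem_bdry hq
  have hperiodic : Periodic (fun t => action g (cos t, sin t)) (2 * π) := fun t => by
    simp only [cos_add_two_pi, sin_add_two_pi]
  have hosc := abs_sub_le_of_periodic_of_monotone_add_mul two_pi_pos hperiodic
    hg.monotone_action_cos_sin_add a b
  linarith

end Action

section Calabi

variable {g h : ℝ × ℝ → ℝ × ℝ}

/-- The integral of the action over the disk, a Calabi-type invariant: it is a homomorphism on the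
area-preserving maps of the disk that fix the origin. -/
def calabi (g : ℝ × ℝ → ℝ × ℝ) : ℝ := ∫ p in disk, action g p

lemma calabi_comp (hg : IsSympO g) (hh : IsSympO h) : calabi (g ∘ h) = calabi g + calabi h := by
  have hint_h : IntegrableOn (action h) disk :=
    hh.1.continuousOn_action.integrableOn_compact isCompact_disk
  have hint_gh : IntegrableOn (fun p => action g (h p)) disk :=
    (hg.1.continuousOn_action.comp hh.1.1.continuous.continuousOn
      hh.1.mapsTo).integrableOn_compact isCompact_disk
  calc calabi (g ∘ h) = ∫ p in disk, (action h p + action g (h p)) :=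
        setIntegral_congr_fun isClosed_disk.measurableSet fun p hp => action_comp hg hh hp
    _ = calabi h + ∫ p in disk, action g (h p) := integral_add hint_h hint_gh
    _ = calabi h + calabi g := by rw [hh.1.setIntegral_comp, ← calabi]
    _ = calabi g + calabi h := add_comm _ _

lemma calabi_id : calabi id = 0 := by
  have h := calabi_comp isSympO_id isSympO_id
  rw [comp_id] at h
  linarith

lemma calabi_iterate (hg : IsSympO g) (n : ℕ) : calabi g^[n] = n * calabi g := by
  induction n with
  | zero => rw [iterate_zero, calabi_id, Nat.cast_zero, zero_mul]
  | succ n ih =>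
    rw [iterate_succ, calabi_comp (hg.iterate n) hg, ih]
    push_cast
    ring

lemma tauL_eq_setIntegral (hg : Differentiable ℝ g) :
    tauL g = ∫ p in disk, 1 / 2 * actionForm g p p := by
  rw [tauL, ← integral_const_mul]
  congr 1 with p
  have hp := map_eq_fst_smul_add_snd_smul (fderiv ℝ g p) p
  simp only [pdx, pdy, fderiv_fst_apply (hg _), fderiv_snd_apply (hg _), actionForm_apply,
    liouville_apply, areaForm_apply, hp, Prod.fst_add, Prod.snd_add, Prod.smul_fst, Prod.smul_snd,
    smul_eq_mul]
  ring

-- The integrand is the derivative of `r ^ 2 / 2 * action g (r • u)`.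
lemma IsSymp.integral_radial (hg : IsSymp g) {u : ℝ × ℝ} (hu : u ∈ disk) :
    ∫ r in (0 : ℝ)..1, r * (1 / 2 * actionForm g (r • u) (r • u) + action g (r • u)) =
      1 / 2 * action g u := by
  have hform := hg.continuous_actionForm
  have haction : ContinuousOn (fun r : ℝ => action g (r • u)) (Icc 0 1) :=
    hg.continuousOn_action.comp (by fun_prop) fun r hr => smul_mem_disk hu hr
  have hderiv (r : ℝ) (hr : r ∈ Ioo (0 : ℝ) 1) :
      HasDerivAt (fun r : ℝ => 1 / 2 * r ^ 2 * action g (r • u))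
        (r * (1 / 2 * actionForm g (r • u) (r • u) + action g (r • u))) r := by
    refine (((hasDerivAt_pow 2 r).const_mul (1 / 2 : ℝ)).mul
      (hg.hasDerivAt_action_smul hu hr)).congr_deriv ?_
    rw [map_smul, smul_eq_mul]
    push_cast
    ring
  have hform_radial : ContinuousOn (fun r : ℝ => 1 / 2 * actionForm g (r • u) (r • u))
      (Icc 0 1) := Continuous.continuousOn (by fun_prop)
  rw [intervalIntegral.integral_eq_sub_of_hasDerivAt_of_le zero_le_one
    (ContinuousOn.mul (by fun_prop) haction) hderiv]
  · simp
  · refine ContinuousOn.intervalIntegrable ?_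
    rw [uIcc_of_le zero_le_one]
    exact continuousOn_id.mul (hform_radial.add haction)

lemma IsSymp.tauL_add_calabi (hg : IsSymp g) :
    tauL g + calabi g = ∫ θ in (-π)..π, 1 / 2 * action g (cos θ, sin θ) := by
  have hform := hg.continuous_actionForm
  have hcont_form : ContinuousOn (fun p => 1 / 2 * actionForm g p p) disk :=
    Continuous.continuousOn (by fun_prop)
  have hcont_action := hg.continuousOn_action
  rw [tauL_eq_setIntegral hg.differentiable, calabi,
    ← integral_add (hcont_form.integrableOn_compact isCompact_disk)
      (hcont_action.integrableOn_compact isCompact_disk),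
    setIntegral_disk_eq_polar (F := fun p => 1 / 2 * actionForm g p p + action g p)
      (hcont_form.add hcont_action)]
  refine intervalIntegral.integral_congr fun θ _ => ?_
  exact hg.integral_radial (bdry_subset_disk (cos_sin_mem_bdry θ))

lemma IsSymp.abs_tauL_add_calabi_sub_le (hg : IsSymp g) :
    |tauL g + calabi g - π * sigmaQ g| ≤ π ^ 2 := by
  have hone : ((1, 0) : ℝ × ℝ) ∈ bdry := by simp [bdry]
  have hcont : Continuous fun θ : ℝ => 1 / 2 * action g (cos θ, sin θ) :=
    continuous_const.mul <| continuous_iff_continuousAt.2 fun θ =>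
      (hg.hasDerivAt_action_cos_sin θ).continuousAt
  have hmean : π * sigmaQ g = ∫ _ in (-π)..π, 1 / 2 * action g (1, 0) := by
    rw [intervalIntegral.integral_const, sigmaQ_eq_action hg.differentiable, smul_eq_mul]
    ring
  have hosc (θ : ℝ) : ‖1 / 2 * action g (cos θ, sin θ) - 1 / 2 * action g (1, 0)‖ ≤ π / 2 := by
    have := hg.abs_action_sub_le (cos_sin_mem_bdry θ) hone
    rw [← mul_sub, norm_mul, Real.norm_eq_abs, Real.norm_eq_abs, abs_of_pos one_half_pos]
    linarith
  rw [hg.tauL_add_calabi, hmean, ← intervalIntegral.integral_sub (hcont.intervalIntegrable _ _)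
    (continuous_const.intervalIntegrable _ _), ← Real.norm_eq_abs]
  calc _ ≤ π / 2 * |π - -π| := intervalIntegral.norm_integral_le_of_norm_le_const fun θ _ => hosc θ
    _ = π ^ 2 := by
      rw [abs_of_pos (by linarith [pi_pos])]
      ring

end Calabi

section Homogenization

variable {g h : ℝ × ℝ → ℝ × ℝ}

/-- The homogenization `σ̄(g) = lim σ(gⁿ) / n` of `σ`; the value is only meaningful when the limit
exists, as it does on maps satisfying `IsSympO`. -/
def sigmaBar (g : ℝ × ℝ → ℝ × ℝ) : ℝ := limUnder atTop fun n : ℕ => sigmaQ g^[n] / n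

lemma abs_sigmaQ_comp_sub_sub_le (hg : IsSympO g) (hh : IsSympO h) :
    |sigmaQ (g ∘ h) - sigmaQ g - sigmaQ h| ≤ π := by
  have hone : ((1, 0) : ℝ × ℝ) ∈ bdry := by simp [bdry]
  have hosc := hg.1.abs_action_sub_le (hh.1.mapsTo_bdry hone) hone
  rw [sigmaQ_eq_action (hg.comp hh).1.differentiable, sigmaQ_eq_action hg.1.differentiable,
    sigmaQ_eq_action hh.1.differentiable, action_comp hg hh (bdry_subset_disk hone)]
  convert hosc using 2
  ring

lemma tendsto_sigmaQ_iterate_div (hg : IsSympO g) :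
    Tendsto (fun n : ℕ => sigmaQ g^[n] / n) atTop (𝓝 (sigmaBar g)) := by
  refine tendsto_nhds_limUnder (exists_tendsto_div_of_abs_add_sub_sub_le (C := π) fun m n => ?_)
  rw [iterate_add]
  exact abs_sigmaQ_comp_sub_sub_le (hg.iterate m) (hg.iterate n)

lemma tendsto_tauL_iterate_div (hg : IsSympO g) :
    Tendsto (fun n : ℕ => tauL g^[n] / n) atTop (𝓝 (π * sigmaBar g - calabi g)) := by
  have hbound (n : ℕ) := (hg.iterate n).1.abs_tauL_add_calabi_sub_le
  have hsmall : Tendsto (fun n : ℕ => (tauL g^[n] + calabi g^[n] - π * sigmaQ g^[n]) / n)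
      atTop (𝓝 0) :=
    tendsto_bdd_div_atTop_nhds_zero (.of_forall fun n => (abs_le.1 (hbound n)).1)
      (.of_forall fun n => (abs_le.1 (hbound n)).2) tendsto_natCast_atTop_atTop
  have hlim := (hsmall.add ((tendsto_sigmaQ_iterate_div hg).const_mul π)).sub_const (calabi g)
  rw [zero_add] at hlim
  refine hlim.congr' ?_
  filter_upwards [eventually_ne_atTop 0] with n hn
  have hn' : (n : ℝ) ≠ 0 := mod_cast hn
  rw [calabi_iterate hg]
  field_simp
  ring

end Homogenization

section Twist

/-- The twist map, rotating each point `p` by the angle `c * |p| ^ 2`. -/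
def twist (c : ℝ) (p : ℝ × ℝ) : ℝ × ℝ :=
  (p.1 * cos (c * (p.1 ^ 2 + p.2 ^ 2)) - p.2 * sin (c * (p.1 ^ 2 + p.2 ^ 2)),
    p.1 * sin (c * (p.1 ^ 2 + p.2 ^ 2)) + p.2 * cos (c * (p.1 ^ 2 + p.2 ^ 2)))

variable (c : ℝ) (p w : ℝ × ℝ)

lemma sq_add_sq_twist : (twist c p).1 ^ 2 + (twist c p).2 ^ 2 = p.1 ^ 2 + p.2 ^ 2 := by
  simp only [twist]
  linear_combination (p.1 ^ 2 + p.2 ^ 2) * cos_sq_add_sin_sq (c * (p.1 ^ 2 + p.2 ^ 2))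

lemma twist_neg_twist : twist (-c) (twist c p) = p := by
  have hcs := cos_sq_add_sin_sq (c * (p.1 ^ 2 + p.2 ^ 2))
  rw [twist, sq_add_sq_twist, neg_mul, cos_neg, sin_neg]
  ext
  · simp only [twist]
    linear_combination p.1 * hcs
  · simp only [twist]
    linear_combination p.2 * hcs

lemma contDiff_twist {n : WithTop ℕ∞} : ContDiff ℝ n (twist c) := by
  unfold twist
  fun_prop

lemma mapsTo_twist_disk : MapsTo (twist c) disk disk := fun p hp =>
  (sq_add_sq_twist c p).trans_le hp

-- The differential is the rotation by the angle `c * |p| ^ 2`, plus the derivative of that angle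
-- times the rotated point turned by a right angle.
lemma fderiv_twist_apply : fderiv ℝ (twist c) p w =
    (w.1 * cos (c * (p.1 ^ 2 + p.2 ^ 2)) - w.2 * sin (c * (p.1 ^ 2 + p.2 ^ 2)),
      w.1 * sin (c * (p.1 ^ 2 + p.2 ^ 2)) + w.2 * cos (c * (p.1 ^ 2 + p.2 ^ 2))) +
    (2 * c * dot p w) • (-(twist c p).2, (twist c p).1) := by
  have hfst : HasFDerivAt (fun q : ℝ × ℝ => q.1) (.fst ℝ ℝ ℝ) p := hasFDerivAt_fst
  have hsnd : HasFDerivAt (fun q : ℝ × ℝ => q.2) (.snd ℝ ℝ ℝ) p := hasFDerivAt_snd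
  have hangle := (hasFDerivAt_sq_add_sq p).const_mul c
  have htwist : HasFDerivAt (twist c) _ p :=
    ((hfst.mul hangle.cos).sub (hsnd.mul hangle.sin)).prodMk
      ((hfst.mul hangle.sin).add (hsnd.mul hangle.cos))
  rw [htwist.fderiv]
  ext <;> simp [twist] <;> ring

lemma isSympO_twist : IsSympO (twist c) := by
  refine ⟨⟨contDiff_twist c, mapsTo_twist_disk c, fun p _ => ?_, twist (-c), contDiff_twist (-c),
    mapsTo_twist_disk (-c), fun p _ => twist_neg_twist c p, fun p _ => ?_⟩, by simp [twist]⟩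
  · have hdiff : Differentiable ℝ (twist c) := (contDiff_twist c).differentiable one_ne_zero
    simp only [jacDet_eq_areaForm (hdiff p), areaForm_apply, fderiv_twist_apply, dot_apply,
      Prod.fst_add, Prod.snd_add, Prod.smul_fst, Prod.smul_snd, smul_eq_mul, twist]
    linear_combination cos_sq_add_sin_sq (c * (p.1 ^ 2 + p.2 ^ 2))
  · simpa only [neg_neg] using twist_neg_twist (-c) p

lemma actionForm_twist_apply : actionForm (twist c) p w = c * (p.1 ^ 2 + p.2 ^ 2) * dot p w := by
  simp only [actionForm_apply, liouville_apply, areaForm_apply, fderiv_twist_apply, Prod.fst_add,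
    Prod.snd_add, Prod.smul_fst, Prod.smul_snd, smul_eq_mul]
  have hrotation : (twist c p).1 *
        (w.1 * sin (c * (p.1 ^ 2 + p.2 ^ 2)) + w.2 * cos (c * (p.1 ^ 2 + p.2 ^ 2))) -
      (twist c p).2 *
        (w.1 * cos (c * (p.1 ^ 2 + p.2 ^ 2)) - w.2 * sin (c * (p.1 ^ 2 + p.2 ^ 2))) =
      p.1 * w.2 - p.2 * w.1 := by
    simp only [twist]
    linear_combination (p.1 * w.2 - p.2 * w.1) * cos_sq_add_sin_sq (c * (p.1 ^ 2 + p.2 ^ 2))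
  linear_combination 1 / 2 * hrotation + c * dot p w * sq_add_sq_twist c p

lemma action_twist : action (twist c) p = c / 4 * (p.1 ^ 2 + p.2 ^ 2) ^ 2 := by
  have hform (t : ℝ) :
      actionForm (twist c) (t • p) p = c * (p.1 ^ 2 + p.2 ^ 2) ^ 2 * t ^ 3 := by
    rw [actionForm_twist_apply, sq_add_sq_smul, map_smul, smul_apply, dot_apply, smul_eq_mul]
    ring
  simp only [action_eq_intervalIntegral, hform, intervalIntegral.integral_const_mul, integral_pow]
  ring

lemma calabi_twist : calabi (twist c) = c * (π / 12) := by
  have hradial (r θ : ℝ) :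
      r • action (twist c) (r • (cos θ, sin θ)) = c / 4 * r ^ 5 := by
    rw [action_twist, sq_add_sq_smul, cos_sq_add_sin_sq, smul_eq_mul]
    ring
  rw [calabi, setIntegral_disk_eq_polar (isSympO_twist c).1.continuousOn_action]
  simp only [hradial, intervalIntegral.integral_const_mul, integral_pow,
    intervalIntegral.integral_const, smul_eq_mul]
  ring

end Twist

/-- for every `g ∈ G_o` the homogenizations
`τ̄(g) = lim_n τ_λ(gⁿ)/n` and `σ̄(g) = lim_n σ(gⁿ)/n` exist, and
`τ̄ - π σ̄ : G_o → ℝ` is a surjective group homomorphism. -/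
theorem tau_sub_pi_sigma_is_surjective_homomorphism :
    ∃ tb sb : (ℝ × ℝ → ℝ × ℝ) → ℝ,
      (∀ g : ℝ × ℝ → ℝ × ℝ, IsSympO g →
        Tendsto (fun n : ℕ => tauL g^[n] / (n : ℝ)) atTop (𝓝 (tb g)) ∧
        Tendsto (fun n : ℕ => sigmaQ g^[n] / (n : ℝ)) atTop (𝓝 (sb g))) ∧
      (∀ g h : ℝ × ℝ → ℝ × ℝ, IsSympO g → IsSympO h →
        tb (g ∘ h) - π * sb (g ∘ h) = (tb g - π * sb g) + (tb h - π * sb h)) ∧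
      (∀ c : ℝ, ∃ g : ℝ × ℝ → ℝ × ℝ, IsSympO g ∧ tb g - π * sb g = c) := by
  refine ⟨fun g => π * sigmaBar g - calabi g, sigmaBar,
    fun g hg => ⟨tendsto_tauL_iterate_div hg, tendsto_sigmaQ_iterate_div hg⟩,
    fun g h hg hh => ?_, fun c => ⟨twist (-(12 * c / π)), isSympO_twist _, ?_⟩⟩
  · simp only [calabi_comp hg hh]
    ring
  · simp only [calabi_twist]
    field_simp
    ring
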